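/- The emptiness problem for register set automata with removal and register emptiness test is undecidable: there is no computable function that, given (an encoding of) an RsA with removal and register emptiness test A, decides whether L(A) = ∅. -/

import Mathlib

/-- A data word over the alphabet `Fin k`, with data domain `𝔻 = ℕ`. -/
abbrev DataWord (k : ℕ) : Type :=
  List (Fin k × ℕ)

/-- A transition of a (concretely encoded) register set automaton with removal and
register emptiness test: `(src, letter, gIn, gNin, gEmp, rem, upd, tgt)`.  Guards
`gIn`, `gNin`, `gEmp` and the removal set `rem` are lists of registers; the update
is a list indexed by register number, `none` standing for the current input `in` and
`some r` for register `r`. -/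
structure CRemTrans (k : ℕ) where
  src : ℕ
  letter : Fin k
  gIn : List ℕ
  gNin : List ℕ
  gEmp : List ℕ
  rem : List ℕ
  upd : List (List (Option ℕ))
  tgt : ℕ

instance (k : ℕ) : Primcodable (CRemTrans k) :=
  Primcodable.ofEquiv
    (ℕ × Fin k × List ℕ × List ℕ × List ℕ × List ℕ × List (List (Option ℕ)) × ℕ)
    { toFun := fun t => (t.src, t.letter, t.gIn, t.gNin, t.gEmp, t.rem, t.upd, t.tgt)
      invFun := fun p =>
        ⟨p.1, p.2.1, p.2.2.1, p.2.2.2.1, p.2.2.2.2.1, p.2.2.2.2.2.1,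
          p.2.2.2.2.2.2.1, p.2.2.2.2.2.2.2⟩
      left_inv := fun _ => rfl
      right_inv := fun _ => rfl }

/-- A (concretely encoded) register set automaton with removal and register emptiness
test, whose states are `0, …, nQ - 1` and registers are `0, …, nR - 1` (initial
segments of `ℕ`). -/
structure CRsARem (k : ℕ) where
  nQ : ℕ
  nR : ℕ
  trans : List (CRemTrans k)
  I : List ℕ
  F : List ℕ

instance (k : ℕ) : Primcodable (CRsARem k) :=
  Primcodable.ofEquiv (ℕ × ℕ × List (CRemTrans k) × List ℕ × List ℕ)
    { toFun := fun A => (A.nQ, A.nR, A.trans, A.I, A.F)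
      invFun := fun p => ⟨p.1, p.2.1, p.2.2.1, p.2.2.2.1, p.2.2.2.2⟩
      left_inv := fun _ => rfl
      right_inv := fun _ => rfl }

/-- The register assignment obtained by applying the update of `t` with current input
data value `d` to the assignment `f` (after the removal phase). -/
def CRemTrans.applyUpd {k : ℕ} (t : CRemTrans k) (f : ℕ → Finset ℕ) (d : ℕ) :
    ℕ → Finset ℕ := fun r =>
  ((t.upd.getD r []).map fun o =>
    match o with
    | none => ({d} : Finset ℕ)
    | some r' => f r').foldr (· ∪ ·) ∅

/-- The full effect of transition `t` on the assignment `f` with current input data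
value `d`: first remove `d` from every register in `rem`, then apply the update. -/
def CRemTrans.apply {k : ℕ} (t : CRemTrans k) (f : ℕ → Finset ℕ) (d : ℕ) :
    ℕ → Finset ℕ :=
  t.applyUpd (fun r => if r ∈ t.rem then (f r).erase d else f r) d

/-- One step of a `CRsARem` from configuration `c` to configuration `c'`, reading the
letter `x`: besides the membership guards, every register in `gEmp` must be empty. -/
def CRsARem.Step {k : ℕ} (A : CRsARem k) (c : ℕ × (ℕ → Finset ℕ)) (x : Fin k × ℕ)
    (c' : ℕ × (ℕ → Finset ℕ)) : Prop :=
  ∃ t ∈ A.trans, t.src = c.1 ∧ t.letter = x.1 ∧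
    (∀ r ∈ t.gIn, x.2 ∈ c.2 r) ∧ (∀ r ∈ t.gNin, x.2 ∉ c.2 r) ∧
    (∀ r ∈ t.gEmp, c.2 r = ∅) ∧
    c' = (t.tgt, t.apply c.2 x.2)

/-- Runs of a `CRsARem`. -/
inductive CRsARem.Run {k : ℕ} (A : CRsARem k) :
    (ℕ × (ℕ → Finset ℕ)) → DataWord k → (ℕ × (ℕ → Finset ℕ)) → Prop where
  | nil (c : ℕ × (ℕ → Finset ℕ)) : CRsARem.Run A c [] c
  | cons {c c' c'' : ℕ × (ℕ → Finset ℕ)} {x : Fin k × ℕ} {w : DataWord k} :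
      A.Step c x c' → CRsARem.Run A c' w c'' → CRsARem.Run A c (x :: w) c''

/-- The language of a `CRsARem`. -/
def CRsARem.Lang {k : ℕ} (A : CRsARem k) : Set (DataWord k) :=
  { w | ∃ q₀ ∈ A.I, ∃ c : ℕ × (ℕ → Finset ℕ),
      A.Run (q₀, fun _ => ∅) w c ∧ c.1 ∈ A.F }

/-- Well-formedness of a `CRsARem`: all states and registers mentioned lie in the
respective initial segments, the membership guards of each transition are disjoint,
and the update is a function on the registers. -/
def CRsARem.WellFormed {k : ℕ} (A : CRsARem k) : Prop :=
  (∀ q ∈ A.I, q < A.nQ) ∧ (∀ q ∈ A.F, q < A.nQ) ∧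
  ∀ t ∈ A.trans, t.src < A.nQ ∧ t.tgt < A.nQ ∧
    (∀ r ∈ t.gIn, r < A.nR) ∧ (∀ r ∈ t.gNin, r < A.nR) ∧
    (∀ r ∈ t.gEmp, r < A.nR) ∧ (∀ r ∈ t.rem, r < A.nR) ∧
    (∀ r ∈ t.gIn, r ∉ t.gNin) ∧
    t.upd.length = A.nR ∧
    ∀ l ∈ t.upd, ∀ r' : ℕ, some r' ∈ l → r' < A.nR

/-!
The cardinalities of the registers act as counters: reading a value outside a register and inserting
it is an increment, reading a stored value and removing it is a decrement, and the emptiness test is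
a zero test. Reachability in a counter machine is thus language nonemptiness for an automaton over a
single letter. Counter machines compute all partial recursive functions, so fix a program for a
universal one. The automata that first increment a counter `n` times and then run this program form
a computable family, and the `n`-th language is nonempty iff the `n`-th computation halts. Hence
emptiness is not even recursively enumerable.
-/

open Function Relation Encodable

/-! ### Counter machines inside register set automata -/

/-- Instructions of a counter machine (Minsky machine) with counters indexed by `ℕ`. -/
inductive CounterInstr where
  | inc (r : ℕ)
  | dec (r : ℕ)
  | isZero (r : ℕ)
  | skip
deriving DecidableEq

namespace CounterInstr

/-- The effect of an instruction on the counter values. A decrement blocks at `0`, a test blocks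
elsewhere. -/
def Step : CounterInstr → (ℕ → ℕ) → (ℕ → ℕ) → Prop
  | inc r, s, s' => s' = update s r (s r + 1)
  | dec r, s, s' => s r ≠ 0 ∧ s' = update s r (s r - 1)
  | isZero r, s, s' => s r = 0 ∧ s' = s
  | skip, s, s' => s' = s

/-- The least `n` such that only counters below `n` are accessed. -/
def numCounters : CounterInstr → ℕ
  | inc r => r + 1
  | dec r => r + 1
  | isZero r => r + 1
  | skip => 0

/-- The effect of an instruction on counters represented by finite sets of data values, while
reading `d`: an increment inserts a fresh value, a decrement removes a stored one. -/
def SetStep : CounterInstr → ℕ → (ℕ → Finset ℕ) → (ℕ → Finset ℕ) → Prop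
  | inc r, d, f, f' => d ∉ f r ∧ f' = update f r (insert d (f r))
  | dec r, d, f, f' => d ∈ f r ∧ f' = update f r ((f r).erase d)
  | isZero r, _, f, f' => f r = ∅ ∧ f' = f
  | skip, _, f, f' => f' = f

theorem SetStep.step_card {a : CounterInstr} {d : ℕ} {f f' : ℕ → Finset ℕ}
    (h : a.SetStep d f f') : a.Step (Finset.card ∘ f) (Finset.card ∘ f') := by
  cases a with
  | inc r =>
    obtain ⟨hd, rfl⟩ := h
    simp [Step, comp_update, Finset.card_insert_of_notMem hd]
  | dec r =>
    obtain ⟨hd, rfl⟩ := h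
    simp [Step, comp_update, Finset.card_erase_of_mem hd, Finset.ne_empty_of_mem hd]
  | isZero r =>
    obtain ⟨hr, rfl⟩ := h
    simp [Step, hr]
  | skip => exact congrArg _ h

theorem exists_setStep_of_step_card {a : CounterInstr} {f : ℕ → Finset ℕ} {s' : ℕ → ℕ}
    (h : a.Step (Finset.card ∘ f) s') : ∃ d f', a.SetStep d f f' ∧ Finset.card ∘ f' = s' := by
  cases a with
  | inc r =>
    obtain ⟨d, hd⟩ := Infinite.exists_notMem_finset (f r)
    exact ⟨d, _, ⟨hd, rfl⟩, by
      rw [comp_update, Finset.card_insert_of_notMem hd]; exact h.symm⟩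
  | dec r =>
    obtain ⟨d, hd⟩ := Finset.card_ne_zero.mp h.1
    exact ⟨d, _, ⟨hd, rfl⟩, by rw [comp_update, Finset.card_erase_of_mem hd]; exact h.2.symm⟩
  | isZero r => exact ⟨0, f, ⟨Finset.card_eq_zero.mp h.1, rfl⟩, h.2.symm⟩
  | skip => exact ⟨0, f, rfl, h.symm⟩

theorem SetStep.eq_empty_of_le {a : CounterInstr} {d R : ℕ} {f f' : ℕ → Finset ℕ}
    (h : a.SetStep d f f') (ha : a.numCounters ≤ R) (hf : ∀ r, R ≤ r → f r = ∅) :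
    ∀ r, R ≤ r → f' r = ∅ := by
  intro r hr
  cases a with
  | inc _ | dec _ => obtain ⟨-, rfl⟩ := h; grind [numCounters, update_apply]
  | isZero _ => rw [h.2, hf r hr]
  | skip => rw [h, hf r hr]

/-- The automaton transition from `q` to `q'` which implements `SetStep` on `R` registers. Every
transition reads the letter `0`, so any nonempty alphabet will do. -/
def toTrans (k R : ℕ) (a : CounterInstr) (q q' : ℕ) : CRemTrans (k + 1) where
  src := q
  letter := 0
  gIn := match a with | dec r => [r] | _ => []
  gNin := match a with | inc r => [r] | _ => []
  gEmp := match a with | isZero r => [r] | _ => []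
  rem := match a with | dec r => [r] | _ => []
  upd := (List.range R).map fun r => if a = inc r then [some r, none] else [some r]
  tgt := q'

theorem apply_toTrans (k : ℕ) {R : ℕ} {a : CounterInstr} (q q' d : ℕ) {f : ℕ → Finset ℕ}
    (ha : a.numCounters ≤ R) (hf : ∀ r, R ≤ r → f r = ∅) :
    (a.toTrans k R q q').apply f d = match a with
      | inc r => update f r (insert d (f r))
      | dec r => update f r ((f r).erase d)
      | _ => f := by
  have happly (r : ℕ) : (a.toTrans k R q q').apply f d r =
      if r < R then (if r ∈ (a.toTrans k R q q').rem then (f r).erase d else f r) ∪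
        (if a = inc r then {d} else ∅) else ∅ := by
    by_cases hr : r < R <;> by_cases hinc : a = inc r <;>
      simp [CRemTrans.apply, CRemTrans.applyUpd, toTrans, hr, hinc]
  ext1 r
  cases a <;> grind [numCounters, toTrans, update_apply]

theorem setStep_iff_toTrans (k : ℕ) {R : ℕ} {a : CounterInstr} (q q' d : ℕ) {f f' : ℕ → Finset ℕ}
    (ha : a.numCounters ≤ R) (hf : ∀ r, R ≤ r → f r = ∅) :
    a.SetStep d f f' ↔
      (∀ r ∈ (a.toTrans k R q q').gIn, d ∈ f r) ∧ (∀ r ∈ (a.toTrans k R q q').gNin, d ∉ f r) ∧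
      (∀ r ∈ (a.toTrans k R q q').gEmp, f r = ∅) ∧ f' = (a.toTrans k R q q').apply f d := by
  rw [apply_toTrans k q q' d ha hf]
  cases a <;> simp [SetStep, toTrans]

end CounterInstr

/-- A nondeterministic counter machine with states in `σ`, given by its list of edges. -/
abbrev CounterMachine (σ : Type*) : Type _ := List (σ × CounterInstr × σ)

namespace CounterMachine

variable {σ : Type*}

/-- One step between configurations, which consist of a state and the counter values. -/
def Step (M : CounterMachine σ) (c c' : σ × (ℕ → ℕ)) : Prop :=
  ∃ a, (c.1, a, c'.1) ∈ M ∧ a.Step c.2 c'.2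

variable [Encodable σ]

/-- The automaton that runs `M` from state `i` to state `t`. Its `Q` states are codes of those of
`M`, and its `R` registers have the counter values as cardinalities. -/
def toRsA (k Q R : ℕ) (M : CounterMachine σ) (i t : σ) : CRsARem (k + 1) where
  nQ := Q
  nR := R
  trans := M.map fun e => e.2.1.toTrans k R (encode e.1) (encode e.2.2)
  I := [encode i]
  F := [encode t]

variable {k Q R : ℕ} {M : CounterMachine σ} {i t : σ}

theorem wellFormed_toRsA (hR : ∀ e ∈ M, e.2.1.numCounters ≤ R)
    (hM : ∀ e ∈ M, encode e.1 < Q ∧ encode e.2.2 < Q) (hi : encode i < Q) (ht : encode t < Q) :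
    (M.toRsA k Q R i t).WellFormed := by
  refine ⟨by simpa [toRsA] using hi, by simpa [toRsA] using ht, ?_⟩
  simp only [toRsA, List.forall_mem_map]
  intro e he
  have hRe := hR e he
  refine ⟨(hM e he).1, (hM e he).2, ?_⟩
  cases h : e.2.1 <;> grind [CounterInstr.toTrans, CounterInstr.numCounters]

theorem step_toRsA_iff (hR : ∀ e ∈ M, e.2.1.numCounters ≤ R) {q : σ} {f : ℕ → Finset ℕ}
    (hf : ∀ r, R ≤ r → f r = ∅) {x : Fin (k + 1) × ℕ} {c' : ℕ × (ℕ → Finset ℕ)} :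
    (M.toRsA k Q R i t).Step (encode q, f) x c' ↔
      x.1 = 0 ∧ ∃ a q', (q, a, q') ∈ M ∧ c'.1 = encode q' ∧ a.SetStep x.2 f c'.2 := by
  constructor
  · rintro ⟨_, hmem, hsrc, hx, hg⟩
    obtain ⟨⟨p, a, q'⟩, he, rfl⟩ := List.mem_map.mp hmem
    obtain rfl := encode_injective hsrc
    obtain ⟨hIn, hNin, hEmp, rfl⟩ := hg
    exact ⟨hx.symm, a, q', he, rfl,
      (CounterInstr.setStep_iff_toTrans k _ _ _ (hR _ he) hf).mpr ⟨hIn, hNin, hEmp, rfl⟩⟩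
  · rintro ⟨hx, a, q', he, hq', hstep⟩
    obtain ⟨hIn, hNin, hEmp, hf'⟩ :=
      (CounterInstr.setStep_iff_toTrans k (encode q) (encode q') _ (hR _ he) hf).mp hstep
    exact ⟨_, List.mem_map.mpr ⟨_, he, rfl⟩, rfl, hx.symm, hIn, hNin, hEmp, Prod.ext hq' hf'⟩

theorem reflTransGen_of_run (hR : ∀ e ∈ M, e.2.1.numCounters ≤ R)
    {c c' : ℕ × (ℕ → Finset ℕ)} {w : DataWord (k + 1)} (h : (M.toRsA k Q R i t).Run c w c')
    {q q' : σ} (hq : c.1 = encode q) (hq' : c'.1 = encode q') (hf : ∀ r, R ≤ r → c.2 r = ∅) :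
    ReflTransGen M.Step (q, Finset.card ∘ c.2) (q', Finset.card ∘ c'.2) := by
  induction h generalizing q with
  | nil c =>
    obtain rfl := encode_injective (hq.symm.trans hq')
    exact .refl
  | @cons c c₁ _ _ _ hstep _ ih =>
    obtain ⟨_, f⟩ := c
    obtain rfl : _ = encode q := hq
    obtain ⟨-, a, q₁, he, hq₁, ha⟩ := (step_toRsA_iff hR hf).mp hstep
    exact .head (b := (q₁, Finset.card ∘ c₁.2)) ⟨a, he, ha.step_card⟩
      (ih hq₁ hq' (ha.eq_empty_of_le (hR _ he) hf))

theorem exists_run_of_reflTransGen (hR : ∀ e ∈ M, e.2.1.numCounters ≤ R)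
    {c c' : σ × (ℕ → ℕ)} (h : ReflTransGen M.Step c c') {f : ℕ → Finset ℕ}
    (hf : ∀ r, R ≤ r → f r = ∅) (hc : c.2 = Finset.card ∘ f) :
    ∃ w f', (M.toRsA k Q R i t).Run (encode c.1, f) w (encode c'.1, f') := by
  induction h using ReflTransGen.head_induction_on generalizing f with
  | refl => exact ⟨[], f, .nil _⟩
  | @head c c₁ hstep _ ih =>
    obtain ⟨a, he, ha⟩ := hstep
    rw [hc] at ha
    obtain ⟨d, f₁, hd, hf₁⟩ := CounterInstr.exists_setStep_of_step_card ha
    obtain ⟨w, f', hw⟩ := ih (hd.eq_empty_of_le (hR _ he) hf) hf₁.symm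
    exact ⟨(0, d) :: w, f', .cons ((step_toRsA_iff hR hf).mpr ⟨rfl, a, c₁.1, he, rfl, hd⟩) hw⟩

theorem lang_toRsA_nonempty_iff (hR : ∀ e ∈ M, e.2.1.numCounters ≤ R) :
    (M.toRsA k Q R i t).Lang.Nonempty ↔ ∃ s, ReflTransGen M.Step (i, 0) (t, s) := by
  have hcard : (0 : ℕ → ℕ) = Finset.card ∘ fun _ => (∅ : Finset ℕ) := by ext; simp
  constructor
  · rintro ⟨w, q₀, hq₀, c, hrun, hc⟩
    rw [hcard]
    exact ⟨_, reflTransGen_of_run hR hrun (List.mem_singleton.mp hq₀) (List.mem_singleton.mp hc)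
      fun _ _ => rfl⟩
  · rintro ⟨s, h⟩
    obtain ⟨w, f', hw⟩ := exists_run_of_reflTransGen hR h (fun _ _ => rfl) hcard
    exact ⟨w, _, List.mem_singleton_self _, _, hw, List.mem_singleton_self _⟩

end CounterMachine

/-! ### Structured counter programs -/

/-- Structured programs over counters; `loop r p` means: while `r ≠ 0`, decrement `r` and run
`p`. -/
inductive CounterProgram where
  | skip
  | inc (r : ℕ)
  | seq (p q : CounterProgram)
  | loop (r : ℕ) (p : CounterProgram)
deriving Encodable

namespace CounterProgram

/-- Big-step semantics: `p.Exec s s'` says that `p`, started on counter values `s`, halts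
with `s'`. -/
inductive Exec : CounterProgram → (ℕ → ℕ) → (ℕ → ℕ) → Prop
  | skip (s : ℕ → ℕ) : Exec skip s s
  | inc (r : ℕ) (s : ℕ → ℕ) : Exec (inc r) s (update s r (s r + 1))
  | seq {p q : CounterProgram} {s t u : ℕ → ℕ} : Exec p s t → Exec q t u → Exec (seq p q) s u
  | loop_zero {r : ℕ} (p : CounterProgram) {s : ℕ → ℕ} : s r = 0 → Exec (loop r p) s s
  | loop_succ {r : ℕ} {p : CounterProgram} {s t u : ℕ → ℕ} : s r ≠ 0 →
      Exec p (update s r (s r - 1)) t → Exec (loop r p) t u → Exec (loop r p) s u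

variable {p q : CounterProgram} {r : ℕ} {s s' t u : ℕ → ℕ}

theorem Exec.unique (ht : p.Exec s t) (hu : p.Exec s u) : t = u := by
  induction ht generalizing u with
  | skip | inc => cases hu; rfl
  | seq _ _ ihp ihq =>
    obtain _ | _ | ⟨hp, hq⟩ := hu
    obtain rfl := ihp hp
    exact ihq hq
  | loop_zero _ h => cases hu <;> trivial
  | loop_succ h _ _ ihp ih =>
    cases hu with
    | loop_zero => contradiction
    | loop_succ _ hp hl =>
      obtain rfl := ihp hp
      exact ih hl

theorem Exec.iff_eq (h : p.Exec s t) : p.Exec s s' ↔ s' = t :=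
  ⟨fun h' => h'.unique h, fun h' => h' ▸ h⟩

theorem exec_skip_iff : skip.Exec s s' ↔ s' = s := (Exec.skip s).iff_eq

theorem exec_inc_iff : (inc r).Exec s s' ↔ s' = update s r (s r + 1) := (Exec.inc r s).iff_eq

theorem exec_seq_iff : (seq p q).Exec s s' ↔ ∃ t, p.Exec s t ∧ q.Exec t s' :=
  ⟨fun | .seq hp hq => ⟨_, hp, hq⟩, fun ⟨_, hp, hq⟩ => .seq hp hq⟩

theorem exec_loop_iff {σ : ℕ → ℕ → ℕ}
    (hσ : ∀ i, σ i r ≠ 0 → p.Exec (update (σ i) r (σ i r - 1)) (σ (i + 1))) :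
    (loop r p).Exec (σ 0) s' ↔ ∃ n, σ n r = 0 ∧ (∀ i < n, σ i r ≠ 0) ∧ s' = σ n := by
  constructor
  · intro h
    generalize hl : loop r p = l, hs : σ 0 = s at h
    induction h generalizing σ with
    | skip | inc | seq => cases hl
    | loop_zero _ h0 =>
      cases hl
      exact ⟨0, by simpa [hs] using h0, by simp, hs.symm⟩
    | @loop_succ _ _ _ _ _ h0 hp _ _ ih =>
      cases hl
      subst hs
      obtain ⟨n, hn, hlt, rfl⟩ := ih (σ := fun i => σ (i + 1)) (fun i => hσ (i + 1)) rfl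
        ((hσ 0 h0).unique hp)
      refine ⟨n + 1, hn, fun i hi => ?_, rfl⟩
      cases i with
      | zero => exact h0
      | succ i => exact hlt i (by lia)
  · rintro ⟨n, hn, hlt, rfl⟩
    refine Nat.decreasingInduction (motive := fun i _ => (loop r p).Exec (σ i) (σ n))
      (fun i hi ih => ?_) (.loop_zero p hn) n.zero_le
    exact .loop_succ (hlt i hi) (hσ i (hlt i hi)) ih

theorem exec_loop_iff_of_count {n : ℕ} {σ : ℕ → ℕ → ℕ} (hs : s = σ 0) (hr : ∀ i, σ i r = n - i)
    (hσ : ∀ i < n, p.Exec (update (σ i) r (n - (i + 1))) (σ (i + 1))) :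
    (loop r p).Exec s s' ↔ s' = σ n := by
  refine Exec.iff_eq (hs ▸ (exec_loop_iff fun i hi => ?_).mpr ⟨n, by grind, by grind, rfl⟩)
  simpa only [hr, Nat.sub_sub] using hσ i (by grind)

theorem exec_loop_seq_inc_iff {b n : ℕ} {F : ℕ → ℕ}
    (hq : ∀ i j, q.Exec (update (update (update s b j) (b + 1) (F i)) (b + 2) i)
      (update (update (update s b j) (b + 1) (F (i + 1))) (b + 2) i)) :
    (loop b (seq q (inc (b + 2)))).Exec
        (update (update (update s b n) (b + 1) (F 0)) (b + 2) 0) s' ↔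
      s' = update (update (update s b 0) (b + 1) (F n)) (b + 2) n := by
  rw [exec_loop_iff_of_count (n := n)
    (σ := fun i => update (update (update s b (n - i)) (b + 1) (F i)) (b + 2) i)]
  · simp
  · simp
  · simp
  · intro i _
    convert (hq i (n - (i + 1))).seq (.inc (b + 2) _) using 1 <;> grind [update_apply]

/-- The program setting counter `r` to `0`. -/
def clear (r : ℕ) : CounterProgram := loop r skip

theorem exec_clear_iff : (clear r).Exec s s' ↔ s' = update s r 0 := by
  rw [clear, exec_loop_iff_of_count (n := s r) (σ := fun i => update s r (s r - i))]
  · simp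
  · simp
  · simp
  · simp [exec_skip_iff]

/-- The program adding counter `a` to counter `b` and setting `a` to `0`. -/
def move (a b : ℕ) : CounterProgram := loop a (inc b)

theorem exec_move_iff {a b : ℕ} (hab : a ≠ b) :
    (move a b).Exec s s' ↔ s' = update (update s a 0) b (s b + s a) := by
  rw [move, exec_loop_iff_of_count (n := s a)
    (σ := fun i => update (update s a (s a - i)) b (s b + i))]
  · simp
  · simp
  · simp [hab]
  · grind [update_apply, exec_inc_iff]

/-- The program copying counter `a` to `out`, with `t` and `t + 1` as auxiliary counters. -/
def copy (a out t : ℕ) : CounterProgram :=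
  seq (loop a (seq (inc t) (inc (t + 1))))
    (seq (move t a) (seq (clear out) (move (t + 1) out)))

theorem exec_copy_iff {a out t : ℕ} (ha : a < t) (hout : out < t) (h₀ : s t = 0)
    (h₁ : s (t + 1) = 0) : (copy a out t).Exec s s' ↔ s' = update s out (s a) := by
  have hloop {s'} : (loop a (seq (inc t) (inc (t + 1)))).Exec s s' ↔
      s' = update (update (update s a 0) t (s a)) (t + 1) (s a) := by
    rw [exec_loop_iff_of_count (n := s a)
      (σ := fun i => update (update (update s a (s a - i)) t i) (t + 1) i)]
    · simp
    · grind [update_apply]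
    · grind [update_apply]
    · intro i _
      simp only [exec_seq_iff, exec_inc_iff, exists_eq_left]
      grind [update_apply]
  simp only [copy, exec_seq_iff, hloop, exec_move_iff ha.ne', exec_clear_iff,
    exec_move_iff (show t + 1 ≠ out by lia), exists_eq_left]
  congr! 1
  ext x
  simp only [update_apply]
  grind

/-- `clearRange b n` sets the counters `b, …, b + n - 1` to `0`. -/
def clearRange : ℕ → ℕ → CounterProgram
  | _, 0 => skip
  | b, n + 1 => seq (clear b) (clearRange (b + 1) n)

theorem exec_clearRange_iff {b n : ℕ} :
    (clearRange b n).Exec s s' ↔ s' = fun r => if b ≤ r ∧ r < b + n then 0 else s r := by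
  induction n generalizing b s with
  | zero => grind [clearRange, exec_skip_iff]
  | succ n ih =>
    simp only [clearRange, exec_seq_iff, exec_clear_iff, exists_eq_left, ih]
    congr! 2
    grind [update_apply]

end CounterProgram

/-! ### Compiling programs with continuation stacks -/

namespace CounterProgram

/-- Big-step semantics of a stack of programs, which are run one after the other from the top. -/
def ExecStack : List CounterProgram → (ℕ → ℕ) → (ℕ → ℕ) → Prop
  | [], s, s' => s' = s
  | p :: K, s, s' => ∃ t, p.Exec s t ∧ ExecStack K t s'

theorem execStack_replicate_inc_append_iff {n r : ℕ} {K : List CounterProgram} {s s' : ℕ → ℕ} :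
    ExecStack (List.replicate n (inc r) ++ K) s s' ↔ ExecStack K (update s r (s r + n)) s' := by
  induction n generalizing s with
  | zero => simp
  | succ n ih =>
    simp only [List.replicate_succ, List.cons_append, ExecStack, exec_inc_iff, exists_eq_left, ih,
      update_self, update_idem, add_assoc, add_comm 1 n]

/-- Small-step edges for running `p` and then the stack `K`. The states are stacks of programs
instead of numbered program points. -/
def edges : CounterProgram → List CounterProgram → CounterMachine (List CounterProgram)
  | skip, K => [(skip :: K, .skip, K)]
  | inc r, K => [(inc r :: K, .inc r, K)]
  | seq p q, K => (seq p q :: K, .skip, p :: q :: K) :: (edges p (q :: K) ++ edges q K)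
  | loop r p, K => (loop r p :: K, .isZero r, K) ::
      (loop r p :: K, .dec r, p :: loop r p :: K) :: edges p (loop r p :: K)

/-- The counter machine with stacks of programs as states that runs the stack it is given. -/
def stackEdges : List CounterProgram → CounterMachine (List CounterProgram)
  | [] => []
  | p :: K => edges p K ++ stackEdges K

theorem execStack_of_mem_edges {p : CounterProgram} {K A B : List CounterProgram}
    {a : CounterInstr} {s t s' : ℕ → ℕ} (he : (A, a, B) ∈ edges p K) (ha : a.Step s t)
    (hB : ExecStack B t s') : ExecStack A s s' := by
  induction p generalizing K with
  | skip =>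
    obtain ⟨rfl, rfl, rfl⟩ : A = _ ∧ a = _ ∧ B = _ := by simpa [edges] using he
    exact ⟨t, exec_skip_iff.mpr ha, hB⟩
  | inc r =>
    obtain ⟨rfl, rfl, rfl⟩ : A = _ ∧ a = _ ∧ B = _ := by simpa [edges] using he
    exact ⟨t, exec_inc_iff.mpr ha, hB⟩
  | seq p q ihp ihq =>
    simp only [edges, List.mem_cons, List.mem_append, Prod.mk.injEq] at he
    obtain ⟨rfl, rfl, rfl⟩ | he | he := he
    · obtain rfl : t = s := ha
      obtain ⟨u, hp, v, hq, hK⟩ := hB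
      exact ⟨v, .seq hp hq, hK⟩
    · exact ihp he
    · exact ihq he
  | loop r p ih =>
    simp only [edges, List.mem_cons, Prod.mk.injEq] at he
    obtain ⟨rfl, rfl, rfl⟩ | ⟨rfl, rfl, rfl⟩ | he := he
    · obtain ⟨h0, rfl⟩ := ha
      exact ⟨t, .loop_zero p h0, hB⟩
    · obtain ⟨h0, rfl⟩ := ha
      obtain ⟨u, hp, v, hl, hK⟩ := hB
      exact ⟨v, .loop_succ h0 hp hl, hK⟩
    · exact ih he

theorem Exec.reflTransGen {p : CounterProgram} {s s' : ℕ → ℕ} (h : p.Exec s s')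
    {K : List CounterProgram} {M : CounterMachine (List CounterProgram)} (hM : edges p K ⊆ M) :
    ReflTransGen M.Step (p :: K, s) (K, s') := by
  induction h generalizing K with
  | skip | inc => exact .single ⟨_, hM (List.mem_singleton_self _), rfl⟩
  | @seq p q s _ _ _ _ ihp ihq =>
    simp only [edges, List.cons_subset, List.append_subset] at hM
    exact .head (b := (p :: q :: K, s)) ⟨_, hM.1, rfl⟩ ((ihp hM.2.1).trans (ihq hM.2.2))
  | loop_zero p h0 =>
    simp only [edges, List.cons_subset] at hM
    exact .single ⟨_, hM.1, h0, rfl⟩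
  | @loop_succ r p s _ _ h0 _ _ ihp ihl =>
    have hM' := hM
    simp only [edges, List.cons_subset] at hM'
    exact .head (b := (p :: loop r p :: K, update s r (s r - 1))) ⟨_, hM'.2.1, h0, rfl⟩
      ((ihp hM'.2.2).trans (ihl hM))

theorem execStack_of_step {K A B : List CounterProgram} {s t s' : ℕ → ℕ}
    (h : (stackEdges K).Step (A, s) (B, t)) (hB : ExecStack B t s') : ExecStack A s s' := by
  obtain ⟨a, he, ha⟩ := h
  induction K with
  | nil => simp [stackEdges] at he
  | cons p K ih => exact (List.mem_append.mp he).elim (execStack_of_mem_edges · ha hB) ih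

theorem ExecStack.reflTransGen {K : List CounterProgram} {s s' : ℕ → ℕ} (h : ExecStack K s s')
    {M : CounterMachine (List CounterProgram)} (hM : stackEdges K ⊆ M) :
    ReflTransGen M.Step (K, s) ([], s') := by
  induction K generalizing s with
  | nil => rw [show s' = s from h]
  | cons p K ih =>
    obtain ⟨t, hp, hK⟩ := h
    simp only [stackEdges, List.append_subset] at hM
    exact (hp.reflTransGen hM.1).trans (ih hK hM.2)

theorem reflTransGen_stackEdges_iff {K : List CounterProgram} {s s' : ℕ → ℕ} :
    ReflTransGen (stackEdges K).Step (K, s) ([], s') ↔ ExecStack K s s' := by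
  refine ⟨fun h => ?_, fun h => h.reflTransGen (List.Subset.refl _)⟩
  exact h.head_induction_on
    (motive := fun (c : List CounterProgram × (ℕ → ℕ)) _ => ExecStack c.1 c.2 s') rfl
    fun hstep _ ih => execStack_of_step hstep ih

end CounterProgram

/-! ### Programs for partial recursive functions -/

namespace CounterProgram

/-- `p` computes the partial function `f` of the counters `ins` into the counter `out`, halting only
if `f` is defined. It leaves all other counters as they were; those from `b` on are scratch space,
assumed to be `0`. -/
def Computes (p : CounterProgram) {n : ℕ} (f : List.Vector ℕ n →. ℕ) (ins : List.Vector ℕ n)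
    (out b : ℕ) : Prop :=
  ∀ s : ℕ → ℕ, (∀ r, b ≤ r → s r = 0) → ∀ s', p.Exec s s' ↔ ∃ y ∈ f (ins.map s), s' = update s out y

end CounterProgram

/-- `f` can be computed with any choice of input counters, output counter and scratch space above
them. The output may be one of the inputs. -/
def CounterProgrammable {n : ℕ} (f : List.Vector ℕ n →. ℕ) : Prop :=
  ∀ (ins : List.Vector ℕ n) (out b : ℕ), (∀ i, ins.get i < b) → out < b →
    ∃ p : CounterProgram, p.Computes f ins out b

theorem forall_get_cons_lt {n b x : ℕ} {xs : List.Vector ℕ n} (hx : x < b)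
    (hxs : ∀ i, xs.get i < b) : ∀ i, (x ::ᵥ xs).get i < b :=
  Fin.forall_fin_succ.mpr ⟨hx, hxs⟩

theorem vector_map_update_of_lt {n b r : ℕ} {ins : List.Vector ℕ n} (h : ∀ i, ins.get i < b)
    (hr : b ≤ r) (s : ℕ → ℕ) (y : ℕ) : ins.map (update s r y) = ins.map s :=
  List.Vector.ext fun i => by simp [((h i).trans_le hr).ne]

namespace CounterProgrammable

open CounterProgram

variable {m n : ℕ}

theorem exists_exec_iff {f : List.Vector ℕ n → ℕ} (hf : CounterProgrammable (n := n) f)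
    {ins : List.Vector ℕ n} {out b : ℕ} (hins : ∀ i, ins.get i < b) (hout : out < b) :
    ∃ p : CounterProgram, ∀ s : ℕ → ℕ, (∀ r, b ≤ r → s r = 0) → ∀ s',
      p.Exec s s' ↔ s' = update s out (f (ins.map s)) := by
  obtain ⟨p, hp⟩ := hf ins out b hins hout
  exact ⟨p, fun s hs s' => by simp [hp s hs s']⟩

theorem zero : CounterProgrammable (n := 0) fun _ => Part.some 0 :=
  fun _ out _ _ _ => ⟨clear out, fun s _ s' => by simp [exec_clear_iff]⟩

theorem get (i : Fin n) : CounterProgrammable (n := n) fun v => Part.some (v.get i) :=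
  fun ins out b hins hout => ⟨copy (ins.get i) out b, fun s hs s' => by
    simp [exec_copy_iff (hins i) hout (hs b le_rfl) (hs _ b.le_succ)]⟩

theorem succ : CounterProgrammable (n := 1) fun v => Part.some v.head.succ :=
  fun ins out b hins hout => ⟨seq (copy (ins.get 0) out b) (inc out), fun s hs s' => by
    simp [exec_seq_iff, exec_inc_iff, exec_copy_iff (hins 0) hout (hs b le_rfl) (hs _ b.le_succ),
      ← List.Vector.get_zero]⟩

/-- The counter values `s` with the list `l` written to the counters from `b` on, then `0`. -/
def store (s : ℕ → ℕ) (b : ℕ) (l : List ℕ) : ℕ → ℕ :=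
  fun r => if r < b then s r else l.getD (r - b) 0

theorem store_cons (s : ℕ → ℕ) (b y : ℕ) (l : List ℕ) :
    store (update s b y) (b + 1) l = store s b (y :: l) := by
  ext r
  simp only [store, update_apply]
  rcases lt_trichotomy r b with h | rfl | h
  · grind
  · simp
  · obtain ⟨j, rfl⟩ := Nat.exists_eq_add_of_lt h
    grind

theorem exists_exec_iff_store_mOfFn (g : Fin n → List.Vector ℕ m →. ℕ)
    (hg : ∀ i, CounterProgrammable (g i)) {ins : List.Vector ℕ m} {b : ℕ}
    (hins : ∀ i, ins.get i < b) :
    ∃ p : CounterProgram, ∀ s, (∀ r, b ≤ r → s r = 0) → ∀ s', p.Exec s s' ↔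
      ∃ v ∈ List.Vector.mOfFn fun i => g i (ins.map s), s' = store s b v.toList := by
  induction n generalizing b with
  | zero =>
    refine ⟨skip, fun s hs s' => ?_⟩
    have : store s b [] = s := by ext r; grind [store]
    simp [List.Vector.mOfFn, exec_skip_iff, this, pure]
  | succ n ih =>
    obtain ⟨p, hp⟩ := hg 0 ins b (b + 1) (fun i => (hins i).trans b.lt_succ_self) b.lt_succ_self
    obtain ⟨q, hq⟩ := ih (fun i => g i.succ) (fun i => hg i.succ) (b := b + 1)
      fun i => (hins i).trans b.lt_succ_self
    refine ⟨seq p q, fun s hs s' => ?_⟩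
    have hmap (y : ℕ) : ins.map (update s b y) = ins.map s :=
      vector_map_update_of_lt hins le_rfl s y
    have hq' (y : ℕ) := hq (update s b y) (by grind [update_apply])
    simp only [exec_seq_iff, hp s (fun r hr => hs r (Nat.le_of_succ_le hr)), hq', hmap, store_cons,
      List.Vector.mOfFn, pure, bind, Part.mem_bind_iff, Part.mem_some_iff, ↓existsAndEq,
      and_assoc, true_and, List.Vector.toList_cons, exists_and_left]

theorem comp {f : List.Vector ℕ n →. ℕ} (g : Fin n → List.Vector ℕ m →. ℕ)
    (hf : CounterProgrammable f) (hg : ∀ i, CounterProgrammable (g i)) :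
    CounterProgrammable fun v => (List.Vector.mOfFn fun i => g i v) >>= f := by
  intro ins out b hins hout
  obtain ⟨p, hp⟩ := exists_exec_iff_store_mOfFn g hg hins
  obtain ⟨q, hq⟩ := hf (List.Vector.ofFn fun i => b + i) out (b + n) (by simp) (by lia)
  refine ⟨seq p (seq q (clearRange b n)), fun s hs s' => ?_⟩
  have hstore (v : List.Vector ℕ n) :
      (List.Vector.ofFn fun i : Fin n => b + i).map (store s b v.toList) = v := by
    ext i
    simp [store, List.Vector.get_eq_get_toList]
  have hq' (v : List.Vector ℕ n) := hq (store s b v.toList)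
    (by grind [store, List.Vector.toList_length])
  have hclear (v : List.Vector ℕ n) (y : ℕ) : (fun r => if b ≤ r ∧ r < b + n then 0 else
      update (store s b v.toList) out y r) = update s out y := by
    ext r
    grind [store, update_apply, List.Vector.toList_length]
  simp only [exec_seq_iff, exec_clearRange_iff, hp s hs, hq', hstore, hclear, bind,
    ↓existsAndEq, and_assoc, true_and]
  grind

theorem prec {f : List.Vector ℕ n → ℕ} {g : List.Vector ℕ (n + 2) → ℕ}
    (hf : CounterProgrammable (n := n) f) (hg : CounterProgrammable (n := n + 2) g) :
    CounterProgrammable (n := n + 1) fun v =>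
      Part.some (v.head.rec (f v.tail) fun y IH => g (y ::ᵥ IH ::ᵥ v.tail)) := by
  intro ins out b hins hout
  obtain ⟨x, xs, rfl⟩ := ins.exists_eq_cons
  simp only [Fin.forall_fin_succ, List.Vector.get_cons_zero, List.Vector.get_cons_succ] at hins
  obtain ⟨hx, hxs⟩ := hins
  obtain ⟨p, hp⟩ := hf.exists_exec_iff (ins := xs) (out := b + 1) (b := b + 2)
    (fun i => (hxs i).trans_le (by lia)) (by lia)
  obtain ⟨q, hq⟩ := hg.exists_exec_iff (ins := (b + 2) ::ᵥ (b + 1) ::ᵥ xs) (out := b + 1)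
    (b := b + 3) (forall_get_cons_lt (by lia) (forall_get_cons_lt (by lia)
      fun i => (hxs i).trans_le (by lia))) (by lia)
  refine ⟨seq (copy x b (b + 1)) (seq p (seq (loop b (seq q (inc (b + 2))))
    (seq (clear (b + 2)) (seq (clear out) (move (b + 1) out))))), fun s hs s' => ?_⟩
  let F (i : ℕ) : ℕ := Nat.rec (f (xs.map s)) (fun y IH => g (y ::ᵥ IH ::ᵥ xs.map s)) i
  have hF₀ : F 0 = f (xs.map s) := rfl
  have hF (i : ℕ) : F (i + 1) = g (i ::ᵥ F i ::ᵥ xs.map s) := rfl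
  change _ ↔ ∃ y ∈ Part.some (F (s x)), s' = update s out y
  clear_value F
  have hcopy {s'} : (copy x b (b + 1)).Exec s s' ↔ s' = update s b (s x) :=
    exec_copy_iff (by lia) (by lia) (hs _ (by lia)) (hs _ (by lia))
  have hinit {s'} : p.Exec (update s b (s x)) s' ↔
      s' = update (update (update s b (s x)) (b + 1) (F 0)) (b + 2) 0 := by
    rw [hp _ (by grind [update_apply]), vector_map_update_of_lt hxs le_rfl, ← hF₀]
    congr! 1
    grind [update_apply]
  have hbody (i j : ℕ) : q.Exec (update (update (update s b j) (b + 1) (F i)) (b + 2) i)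
      (update (update (update s b j) (b + 1) (F (i + 1))) (b + 2) i) := by
    rw [hq _ (by grind [update_apply])]
    have hmap : ((b + 2) ::ᵥ (b + 1) ::ᵥ xs).map
        (update (update (update s b j) (b + 1) (F i)) (b + 2) i) = i ::ᵥ F i ::ᵥ xs.map s := by
      simp [vector_map_update_of_lt hxs]
    grind [update_apply]
  simp only [exec_seq_iff, hcopy, hinit, exec_loop_seq_inc_iff hbody, exists_eq_left,
    exec_clear_iff, exec_move_iff (show b + 1 ≠ out by lia), Part.mem_some_iff]
  congr! 1
  ext r
  simp only [update_apply]
  grind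

theorem rfind {f : List.Vector ℕ (n + 1) → ℕ} (hf : CounterProgrammable (n := n + 1) f) :
    CounterProgrammable (n := n) fun v =>
      Nat.rfind fun i => Part.some (f (i ::ᵥ v) = 0 : Bool) := by
  intro ins out b hins hout
  obtain ⟨q, hq⟩ := hf.exists_exec_iff (ins := b ::ᵥ ins) (out := b + 1) (b := b + 2)
    (forall_get_cons_lt (by lia) fun i => (hins i).trans_le (by lia)) (by lia)
  refine ⟨seq q (seq (loop (b + 1) (seq (inc b) q)) (seq (clear out) (move b out))),
    fun s hs s' => ?_⟩
  let σ (i : ℕ) : ℕ → ℕ := update (update s b i) (b + 1) (f (i ::ᵥ ins.map s))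
  have hq' {i z : ℕ} {s'} : q.Exec (update (update s b i) (b + 1) z) s' ↔ s' = σ i := by
    rw [hq _ (by grind [update_apply])]
    simp [vector_map_update_of_lt hins, σ]
  have hinit {s'} : q.Exec s s' ↔ s' = σ 0 := by
    have hs0 : update (update s b 0) (b + 1) 0 = s := by ext r; grind [update_apply]
    rw [← hq', hs0]
  have hloop {s'} : (loop (b + 1) (seq (inc b) q)).Exec (σ 0) s' ↔
      ∃ i, f (i ::ᵥ ins.map s) = 0 ∧ (∀ j < i, f (j ::ᵥ ins.map s) ≠ 0) ∧ s' = σ i := by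
    rw [exec_loop_iff (σ := σ)]
    · simp [σ]
    · intro i _
      have hσ : update (update (σ i) (b + 1) (σ i (b + 1) - 1)) b (i + 1) =
          update (update s b (i + 1)) (b + 1) (σ i (b + 1) - 1) := by
        ext r; grind [update_apply]
      have hb : update (σ i) (b + 1) (σ i (b + 1) - 1) b = i := by simp [σ]
      rw [exec_seq_iff]
      simp only [exec_inc_iff, exists_eq_left, hb, hσ, hq']
  have hmove {i : ℕ} (hi : f (i ::ᵥ ins.map s) = 0) : update (update (update (σ i) out 0) b 0) out
      (update (σ i) out 0 out + update (σ i) out 0 b) = update s out i := by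
    ext r
    simp only [σ, hi, update_apply]
    grind
  have hmem {i : ℕ} : i ∈ Nat.rfind (fun i => Part.some (f (i ::ᵥ ins.map s) = 0 : Bool)) ↔
      f (i ::ᵥ ins.map s) = 0 ∧ ∀ j < i, f (j ::ᵥ ins.map s) ≠ 0 :=
    Nat.mem_rfind.trans (by simp)
  simp only [exec_seq_iff, hinit, exists_eq_left, hloop, exec_clear_iff, exec_move_iff hout.ne',
    hmem]
  grind

theorem of_primrec' {f : List.Vector ℕ n → ℕ} (hf : Nat.Primrec' f) :
    CounterProgrammable (n := n) f := by
  induction hf with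
  | zero => exact zero
  | succ => exact succ
  | get i => exact get i
  | @comp _ _ f g _ _ ihf ihg =>
    have hbind : (fun v => (List.Vector.mOfFn fun i => Part.some (g i v)) >>= (f : _ →. ℕ)) =
        fun v => Part.some (f (List.Vector.ofFn fun i => g i v)) :=
      funext fun v => by rw [Vector.mOfFn_part_some]; exact Part.bind_some _ _
    exact hbind.subst (motive := CounterProgrammable) (comp _ ihf ihg)
  | prec _ _ ihf ihg => exact prec ihf ihg

theorem of_partrec' {f : List.Vector ℕ n →. ℕ} (hf : Nat.Partrec' f) : CounterProgrammable f := by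
  induction hf with
  | prim hf => exact of_primrec' hf
  | comp g _ _ ihf ihg => exact comp g ihf ihg
  | rfind _ ih => exact rfind ih

end CounterProgrammable

theorem CounterProgram.exists_halts_iff_dom {f : ℕ →. ℕ} (hf : Partrec f) :
    ∃ p : CounterProgram, ∀ n, (∃ s', p.Exec (update 0 0 n) s') ↔ (f n).Dom := by
  obtain ⟨p, hp⟩ := CounterProgrammable.of_partrec' (Nat.Partrec'.part_iff₁.mpr hf)
    (0 ::ᵥ .nil) 0 1 (by simp) one_pos
  refine ⟨p, fun n => ?_⟩
  have hp' := hp (update 0 0 n) fun r hr => update_of_ne (by lia) _ _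
  simp [hp', Part.dom_iff_mem]

/-! ### The reduction from the halting problem -/

theorem CRsARem.primrec_mk {k : ℕ} :
    Primrec fun x : ℕ × ℕ × List (CRemTrans k) × List ℕ × List ℕ =>
      (⟨x.1, x.2.1, x.2.2.1, x.2.2.2.1, x.2.2.2.2⟩ : CRsARem k) :=
  Primrec.of_equiv_symm (e := ⟨fun A : CRsARem k => (A.nQ, A.nR, A.trans, A.I, A.F),
    fun x => ⟨x.1, x.2.1, x.2.2.1, x.2.2.2.1, x.2.2.2.2⟩, fun _ => rfl, fun _ => rfl⟩)

theorem CRemTrans.primrec_mk {k : ℕ} :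
    Primrec fun x : ℕ × Fin k × List ℕ × List ℕ × List ℕ × List ℕ ×
        List (List (Option ℕ)) × ℕ =>
      (⟨x.1, x.2.1, x.2.2.1, x.2.2.2.1, x.2.2.2.2.1, x.2.2.2.2.2.1, x.2.2.2.2.2.2.1,
        x.2.2.2.2.2.2.2⟩ : CRemTrans k) :=
  Primrec.of_equiv_symm (e := ⟨
    fun t : CRemTrans k => (t.src, t.letter, t.gIn, t.gNin, t.gEmp, t.rem, t.upd, t.tgt),
    fun x => ⟨x.1, x.2.1, x.2.2.1, x.2.2.2.1, x.2.2.2.2.1, x.2.2.2.2.2.1, x.2.2.2.2.2.2.1,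
      x.2.2.2.2.2.2.2⟩, fun _ => rfl, fun _ => rfl⟩)

theorem CounterInstr.primrec_toTrans (k R : ℕ) (a : CounterInstr) :
    Primrec₂ (a.toTrans k R) :=
  CRemTrans.primrec_mk.comp <| .pair .fst <| .pair (.const _) <| .pair (.const _) <|
    .pair (.const _) <| .pair (.const _) <| .pair (.const _) <| .pair (.const _) .snd

namespace CounterProgram

/-- The stack that runs `p` on the input `n` in counter `0`. Preparing the input by `n` increments
makes only the initial part of the machine depend on `n`. -/
def inputStack (p : CounterProgram) (n : ℕ) : List CounterProgram :=
  List.replicate n (inc 0) ++ [p]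

/-- The automaton running `p` on the input `n`. A bound `B` on the counters and on the codes of the
states of `stackEdges [p]` is supplied from outside, as it does not depend on `n`. -/
def toRsA (k B : ℕ) (p : CounterProgram) (n : ℕ) : CRsARem (k + 1) :=
  (stackEdges (p.inputStack n)).toRsA k (encode (p.inputStack n) + B + 1) (B + 1)
    (p.inputStack n) []

variable {k B : ℕ} {p : CounterProgram}

theorem inputStack_succ (p : CounterProgram) (n : ℕ) :
    p.inputStack (n + 1) = inc 0 :: p.inputStack n := rfl

theorem stackEdges_inputStack_succ (p : CounterProgram) (n : ℕ) :
    stackEdges (p.inputStack (n + 1)) =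
      (p.inputStack (n + 1), .inc 0, p.inputStack n) :: stackEdges (p.inputStack n) := rfl

theorem primrec_encode_inputStack (p : CounterProgram) :
    Primrec fun n => encode (p.inputStack n) := by
  refine (Primrec.nat_rec₁ (f := fun _ c => (Nat.pair (encode (inc 0)) c).succ) (encode [p])
    (Primrec.succ.comp (Primrec₂.natPair.comp (.const _) .snd))).of_eq fun n => ?_
  induction n with
  | zero => rfl
  | succ n ih => exact congrArg (fun c => (Nat.pair (encode (inc 0)) c).succ) ih

theorem primrec_toRsA (k B : ℕ) (p : CounterProgram) : Primrec (p.toRsA k B) := by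
  have hK := p.primrec_encode_inputStack
  have htrans : Primrec fun n => (p.toRsA k B n).trans := by
    refine (Primrec.nat_rec₁ (f := fun n T => (CounterInstr.inc 0).toTrans k (B + 1)
      (encode (p.inputStack (n + 1))) (encode (p.inputStack n)) :: T) (p.toRsA k B 0).trans
      (Primrec.list_cons.comp ((CounterInstr.primrec_toTrans k (B + 1) (.inc 0)).comp
        (hK.comp (Primrec.succ.comp .fst)) (hK.comp .fst)) .snd)).of_eq fun n => ?_
    induction n with
    | zero => rfl
    | succ n ih => exact congrArg _ ih
  exact CRsARem.primrec_mk.comp <|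
    .pair (Primrec.succ.comp (Primrec.nat_add.comp hK (.const B))) <| .pair (.const (B + 1)) <|
    .pair htrans <| .pair (Primrec.list_cons.comp hK (.const [])) (.const [encode []])

theorem forall_stackEdges_inputStack_le (hB : ∀ e ∈ stackEdges [p],
      e.2.1.numCounters ≤ B ∧ encode e.1 ≤ B ∧ encode e.2.2 ≤ B) (n : ℕ) :
    ∀ e ∈ stackEdges (p.inputStack n), e.2.1.numCounters ≤ B + 1 ∧
      encode e.1 ≤ encode (p.inputStack n) + B ∧ encode e.2.2 ≤ encode (p.inputStack n) + B := by
  induction n with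
  | zero => exact fun e he => by grind [inputStack]
  | succ n ih =>
    have hlt : encode (p.inputStack n) < encode (p.inputStack (n + 1)) := by
      rw [inputStack_succ, encode_list_cons]
      exact Nat.lt_succ_of_le (Nat.right_le_pair _ _)
    rw [stackEdges_inputStack_succ]
    grind [CounterInstr.numCounters]

theorem lang_toRsA_nonempty_iff (hB : ∀ e ∈ stackEdges [p],
      e.2.1.numCounters ≤ B ∧ encode e.1 ≤ B ∧ encode e.2.2 ≤ B) (n : ℕ) :
    (p.toRsA k B n).Lang.Nonempty ↔ ∃ s', p.Exec (update 0 0 n) s' := by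
  rw [toRsA, CounterMachine.lang_toRsA_nonempty_iff
    fun e he => (forall_stackEdges_inputStack_le hB n e he).1]
  simp [reflTransGen_stackEdges_iff, inputStack, execStack_replicate_inc_append_iff, ExecStack]

theorem exists_toRsA_reduction (k : ℕ) (p : CounterProgram) :
    ∃ A : ℕ → CRsARem (k + 1), Primrec A ∧ ∀ n, (A n).WellFormed ∧
      ((A n).Lang.Nonempty ↔ ∃ s', p.Exec (update 0 0 n) s') := by
  obtain ⟨B, hB⟩ := ((stackEdges [p]).finite_toSet.image
    fun e => e.2.1.numCounters + encode e.1 + encode e.2.2).bddAbove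
  have hB' : ∀ e ∈ stackEdges [p],
      e.2.1.numCounters ≤ B ∧ encode e.1 ≤ B ∧ encode e.2.2 ≤ B := fun e he => by
    have := hB (Set.mem_image_of_mem _ he)
    lia
  have hle := forall_stackEdges_inputStack_le hB'
  refine ⟨p.toRsA k B, primrec_toRsA k B p, fun n => ⟨?_, lang_toRsA_nonempty_iff hB' n⟩⟩
  exact CounterMachine.wellFormed_toRsA (fun e he => (hle n e he).1)
    (fun e he => by have := hle n e he; lia) (by lia) (Nat.succ_pos _)

end CounterProgram

theorem exists_computable_lang_nonempty_iff_eval_dom (k : ℕ) :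
    ∃ A : Nat.Partrec.Code → CRsARem (k + 1), Computable A ∧
      ∀ c, (A c).WellFormed ∧ ((A c).Lang.Nonempty ↔ (c.eval 0).Dom) := by
  obtain ⟨p, hp⟩ := CounterProgram.exists_halts_iff_dom
    (f := fun m => (Denumerable.ofNat Nat.Partrec.Code m).eval 0)
    (Nat.Partrec.Code.eval_part.comp (Computable.ofNat _) (.const 0))
  obtain ⟨A, hA, hAp⟩ := p.exists_toRsA_reduction k
  refine ⟨fun c => A (encode c), hA.to_comp.comp .encode, fun c => ⟨(hAp _).1, ?_⟩⟩
  rw [(hAp _).2, hp, Denumerable.ofNat_encode]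

theorem rsarem_emptiness_undecidable_general (k : ℕ) :
    ¬ ∃ p : CRsARem (k + 1) → Prop, REPred p ∧
        ∀ A : CRsARem (k + 1), A.WellFormed → (p A ↔ CRsARem.Lang A = ∅) := by
  rintro ⟨p, hp, hpA⟩
  obtain ⟨A, hA, hdom⟩ := exists_computable_lang_nonempty_iff_eval_dom k
  have hpc : REPred fun c => p (A c) := Partrec.comp hp hA
  refine ComputablePred.halting_problem_not_re 0 (hpc.of_eq fun c => ?_)
  rw [hpA _ (hdom c).1, ← (hdom c).2, Set.not_nonempty_iff_eq_empty]

/-- The emptiness problem for register set automata with removal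
and register emptiness test is undecidable: no computable function decides, given
(an encoding of) such an automaton, whether its language is empty. -/
theorem rsarem_emptiness_undecidable (k : ℕ) :
    ¬ ∃ f : CRsARem (k + 1) → Bool, Computable f ∧
        ∀ A : CRsARem (k + 1), A.WellFormed → (f A = true ↔ CRsARem.Lang A = ∅) := by
  rintro ⟨f, hf, hfA⟩
  have hcomp : ComputablePred fun A => f A = true := ⟨inferInstance, by simpa using hf⟩
  exact rsarem_emptiness_undecidable_general k ⟨_, hcomp.to_re, hfA⟩
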